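/- Fix an admissible test family and equip Conf^lf_∞(ℂ) with the sum metric d_sum. Then the metric space (Conf^lf_∞(ℂ), d_sum) is path-connected. -/

import Mathlib

open scoped Topology
open Filter

noncomputable section

/-- A subset of `ℂ` is locally finite if it meets every compact set in a finite set. -/
def LocFin (A : Set ℂ) : Prop := ∀ K : Set ℂ, IsCompact K → (A ∩ K).Finite

/-- Membership in `C^lf_∞(ℂ)`: countably infinite, locally finite subsets of `ℂ`. -/
def IsClf (A : Set ℂ) : Prop := A.Countable ∧ A.Infinite ∧ LocFin A

/-- An admissible test family `(φ_j)_{j≥1}` (indexed here by `j : ℕ`, with `φ j`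
representing `φ_{j+1}`): for every `m ≥ 1` the subfamily of those `φ_j` supported in the
closed ball `K_m` is dense, for the sup norm, in the continuous compactly supported
functions with support in `K_m`. -/
structure TestFamily where
  φ : ℕ → ℂ → ℝ
  cont : ∀ j, Continuous (φ j)
  cpt : ∀ j, HasCompactSupport (φ j)
  dense : ∀ m : ℕ, 1 ≤ m → ∀ ψ : ℂ → ℝ, Continuous ψ → HasCompactSupport ψ →
      tsupport ψ ⊆ Metric.closedBall (0 : ℂ) (m : ℝ) →
      ∀ ε : ℝ, 0 < ε → ∃ j, tsupport (φ j) ⊆ Metric.closedBall (0 : ℂ) (m : ℝ) ∧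
        ∀ z, |φ j z - ψ z| ≤ ε

/-- `S_j(A) = ∑_{a∈A} φ_j(a)` (a sum with finitely many nonzero terms). -/
def Ssum (T : TestFamily) (j : ℕ) (A : Set ℂ) : ℝ := ∑ᶠ a ∈ A, T.φ j a

/-- The vague metric `d_V(A,B) = ∑_j 2^{-j} |S_j(A)-S_j(B)| / (1+|S_j(A)-S_j(B)|)`. -/
def dV (T : TestFamily) (A B : Set ℂ) : ℝ :=
  ∑' j : ℕ, (1 / 2 : ℝ) ^ (j + 1) *
    (|Ssum T j A - Ssum T j B| / (1 + |Ssum T j A - Ssum T j B|))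

/-- Ordered locally finite infinite configurations: injective sequences in `ℂ` with only
finitely many terms in each bounded disk. -/
def IsConf (x : ℕ → ℂ) : Prop :=
  Function.Injective x ∧ ∀ R : ℝ, 0 < R → {j : ℕ | ‖x j‖ ≤ R}.Finite

/-- The product metric `d_prod(x,y) = ∑_j 2^{-j} min(|x_j - y_j|, 1)`. -/
def dProd (x y : ℕ → ℂ) : ℝ :=
  ∑' j : ℕ, (1 / 2 : ℝ) ^ (j + 1) * min ‖x j - y j‖ 1

/-- The projection `P` to the underlying unordered configuration. -/
def Pmap (x : ℕ → ℂ) : Set ℂ := Set.range x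

/-- The sum metric `d_sum(x,y) = d_prod(x,y) + d_V(P(x),P(y))`. -/
def dSum (T : TestFamily) (x y : ℕ → ℂ) : ℝ :=
  dProd x y + dV T (Pmap x) (Pmap y)

/-- The space `Conf^lf_∞(ℂ)`; the test family is carried as a (phantom) parameter so that
the metric topology of `d_sum` can be installed as a typeclass instance. -/
structure ConfSp (T : TestFamily) where
  seq : ℕ → ℂ
  prop : IsConf seq

/-- The metric topology of `d_sum`: the topology generated by its open balls. -/
instance (T : TestFamily) : TopologicalSpace (ConfSp T) :=
  TopologicalSpace.generateFrom
    {s : Set (ConfSp T) | ∃ (x : ConfSp T) (ε : ℝ), 0 < ε ∧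
      s = {y : ConfSp T | dSum T x.seq y.seq < ε}}

/-- The basepoint `Ñ = (1, 2, 3, …)`. -/
def Ntilde (T : TestFamily) : ConfSp T where
  seq := fun j => (j : ℂ) + 1
  prop := by
    constructor
    · intro a b hab
      have h : ((a : ℂ) + 1) = ((b : ℂ) + 1) := hab
      have h2 : (a : ℂ) = (b : ℂ) := by linear_combination h
      exact_mod_cast h2
    · intro R hR
      apply Set.Finite.subset (Set.finite_Iic (Nat.floor R))
      intro j hj
      simp only [Set.mem_setOf_eq] at hj
      have habs : ‖(j : ℂ) + 1‖ = (j : ℝ) + 1 := by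
        rw [show ((j : ℂ) + 1) = (((j : ℝ) + 1 : ℝ) : ℂ) by push_cast; ring]
        rw [Complex.norm_real, Real.norm_of_nonneg (by positivity)]
      rw [habs] at hj
      have : (j : ℝ) ≤ R := by linarith
      exact Set.mem_Iic.mpr (Nat.le_floor this)

/-!
The topology of `d_sum` is no finer than the one generated by the coordinates and by the linear
statistics `x ↦ ∑ᵢ φ(xᵢ)` with `φ` continuous and compactly supported, so it is enough to join two
configurations in the latter.

Move the `i`-th point from `xᵢ` to `yᵢ` along the parabola `(1 - t) xᵢ + t yᵢ + t (1 - t) vᵢ`. If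
`vᵢ` is orthogonal to `yᵢ - xᵢ`, long, and points away from the origin, the arc stays at distance at
least `min ‖xᵢ‖ ‖yᵢ‖ / 2` from the origin; hence only finitely many arcs meet a given compact set
and all linear statistics are continuous along the motion. Collisions are avoided by adding `aᵢ c`
to `vᵢ`, with distinct weights `aᵢ ∈ (0, 1]` and a single small vector `c`: the values of `c`
for which the points `i` and `j` collide at a time in `(0, 1)` form a smooth curve, and countably
many curves cannot fill a ball in dimension at least two.
-/

open Function Set Module
open scoped CompactlySupported

section Genericity

variable {ι E F : Type*} [NormedAddCommGroup E] [NormedSpace ℝ E]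
  [NormedAddCommGroup F] [NormedSpace ℝ F] [FiniteDimensional ℝ F]

lemma dense_compl_iUnion_image_of_contDiffOn [Countable ι] {s : Set F} (hs : Convex ℝ s)
    {g : ι → F → E} (hg : ∀ i, ContDiffOn ℝ 1 (g i) s) (hFE : finrank ℝ F < finrank ℝ E) :
    Dense (⋃ i, g i '' s)ᶜ := by
  have : FiniteDimensional ℝ E := .of_finrank_pos (by lia)
  refine dense_compl_of_dimH_lt_finrank (lt_of_le_of_lt ?_ (Nat.cast_lt.2 hFE))
  rw [dimH_iUnion]
  refine iSup_le fun i ↦ ?_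
  calc dimH (g i '' s) ≤ dimH s := (hg i).dimH_image_le hs subset_rfl
    _ ≤ dimH (univ : Set F) := dimH_mono (subset_univ s)
    _ = finrank ℝ F := Real.dimH_univ_eq_finrank F

lemma dense_setOf_injective_add_smul [Countable ι] {s : Set F} (hs : Convex ℝ s)
    {b : ι → F → E} (hb : ∀ i, ContDiffOn ℝ 1 (b i) s)
    {w : F → ℝ} (hw : ContDiffOn ℝ 1 w s) (hw0 : ∀ t ∈ s, w t ≠ 0)
    {a : ι → ℝ} (ha : Injective a) (hFE : finrank ℝ F < finrank ℝ E) :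
    Dense {c : E | ∀ t ∈ s, Injective fun i ↦ b i t + (w t * a i) • c} := by
  -- `g (i, j) t` is the only `c` for which the `i`-th and `j`-th points coincide at `t`
  let g (p : ι × ι) (t : F) : E := (w t)⁻¹ • (a p.1 - a p.2)⁻¹ • (b p.2 t - b p.1 t)
  have hg (p : ι × ι) : ContDiffOn ℝ 1 (g p) s :=
    (hw.inv hw0).smul (contDiffOn_const.smul ((hb p.2).sub (hb p.1)))
  refine (dense_compl_iUnion_image_of_contDiffOn hs hg hFE).mono fun c hc t ht i j hij ↦ ?_
  by_contra hne
  refine hc (mem_iUnion.2 ⟨(i, j), t, ht, ?_⟩)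
  have hcollision : b j t - b i t = w t • (a i - a j) • c := by
    simp only [mul_smul] at hij
    rw [sub_smul, smul_sub, sub_eq_sub_iff_add_eq_add, ← hij, add_comm]
  simp only [g, hcollision]
  rw [smul_comm (w t), inv_smul_smul₀ (sub_ne_zero.2 (ha.ne hne)), inv_smul_smul₀ (hw0 t ht)]

end Genericity

section ParabolicArc

variable {ι E : Type*} [NormedAddCommGroup E]

/-- The parabola from `x` (at time `0`) to `y` (at time `1`) which deviates from the segment by
`t (1 - t) v` at time `t`. -/
def parabolicArc [NormedSpace ℝ E] (x y v : E) (t : ℝ) : E :=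
  AffineMap.lineMap x y t + (t * (1 - t)) • v

section NormedSpace

variable [NormedSpace ℝ E]

@[simp]
lemma parabolicArc_zero (x y v : E) : parabolicArc x y v 0 = x := by simp [parabolicArc]

@[simp]
lemma parabolicArc_one (x y v : E) : parabolicArc x y v 1 = y := by simp [parabolicArc]

lemma contDiff_parabolicArc (x y v : E) {n : WithTop ℕ∞} : ContDiff ℝ n (parabolicArc x y v) := by
  unfold parabolicArc
  simp only [AffineMap.lineMap_apply_module]
  fun_prop

lemma parabolicArc_add (x y v w : E) (t : ℝ) :
    parabolicArc x y (v + w) t = parabolicArc x y v t + (t * (1 - t)) • w := by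
  simp only [parabolicArc, smul_add, add_assoc]

lemma norm_parabolicArc_sub_le (x y v v' : E) {t : ℝ} (ht : t ∈ Icc (0 : ℝ) 1) :
    ‖parabolicArc x y v t - parabolicArc x y v' t‖ ≤ ‖v - v'‖ := by
  have h0 : 0 ≤ t * (1 - t) := mul_nonneg ht.1 (sub_nonneg.2 ht.2)
  have h1 : t * (1 - t) ≤ 1 := mul_le_one₀ ht.2 (sub_nonneg.2 ht.2) (sub_le_self 1 ht.1)
  rw [parabolicArc, parabolicArc, add_sub_add_left_eq_sub, ← smul_sub, norm_smul,
    Real.norm_of_nonneg h0]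
  exact mul_le_of_le_one_left (norm_nonneg _) h1

lemma exists_forall_injective_parabolicArc [Countable ι] (hE : 1 < finrank ℝ E)
    {x y : ι → E} (hx : Injective x) (hy : Injective y) (v : ι → E) {ε : ℝ} (hε : 0 < ε) :
    ∃ v' : ι → E, (∀ i, ‖v' i - v i‖ ≤ ε) ∧
      ∀ t ∈ Icc (0 : ℝ) 1, Injective fun i ↦ parabolicArc (x i) (y i) (v' i) t := by
  obtain ⟨f, hf⟩ := exists_injective_nat ι
  let a (i : ι) : ℝ := ((f i : ℝ) + 1)⁻¹
  have ha : Injective a := fun i j hij ↦ hf (by simpa [a] using hij)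
  have ha1 (i : ι) : ‖a i‖ ≤ 1 := by
    rw [Real.norm_of_nonneg (by positivity)]
    exact inv_le_one_of_one_le₀ (by simp)
  have hdense : Dense {c : E | ∀ t ∈ Ioo (0 : ℝ) 1,
      Injective fun i ↦ parabolicArc (x i) (y i) (v i) t + (t * (1 - t) * a i) • c} :=
    dense_setOf_injective_add_smul (convex_Ioo 0 1)
      (fun i ↦ (contDiff_parabolicArc (x i) (y i) (v i)).contDiffOn) (by fun_prop)
      (fun t ht ↦ (mul_pos ht.1 (sub_pos.2 ht.2)).ne') ha (by simpa using hE)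
  obtain ⟨c, hc, hcε⟩ := hdense.exists_mem_open Metric.isOpen_ball (Metric.nonempty_ball.2 hε)
  refine ⟨fun i ↦ v i + a i • c, fun i ↦ ?_, fun t ht ↦ ?_⟩
  · rw [add_sub_cancel_left, norm_smul]
    exact (mul_le_of_le_one_left (norm_nonneg c) (ha1 i)).trans (mem_ball_zero_iff.1 hcε).le
  · rcases eq_endpoints_or_mem_Ioo_of_mem_Icc ht with rfl | rfl | ht
    · simpa using hx
    · simpa using hy
    · simpa only [parabolicArc_add, smul_smul] using hc t ht

end NormedSpace

variable [InnerProductSpace ℝ E]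

lemma exists_inner_eq_zero_of_one_lt_finrank (hE : 1 < finrank ℝ E) (u x : E) {r : ℝ}
    (hr : 0 ≤ r) : ∃ v : E, inner ℝ u v = 0 ∧ 0 ≤ inner ℝ x v ∧ ‖v‖ = r := by
  have : FiniteDimensional ℝ E := .of_finrank_pos (by lia)
  have hker : (innerₛₗ ℝ u).ker ≠ ⊥ := LinearMap.ker_ne_bot_of_finrank_lt (by simpa using hE)
  have : Nontrivial (innerₛₗ ℝ u).ker := Submodule.nontrivial_iff_ne_bot.2 hker
  obtain ⟨⟨v, hv⟩, hvr⟩ := exists_norm_eq (innerₛₗ ℝ u).ker hr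
  have huv : inner ℝ u v = 0 := hv
  rcases le_total 0 (inner ℝ x v) with hxv | hxv
  · exact ⟨v, huv, hxv, hvr⟩
  · exact ⟨-v, by simp [huv], by simpa using hxv, by simpa using hvr⟩

lemma norm_le_norm_add_of_inner_nonneg {p q : E} (h : 0 ≤ inner ℝ p q) : ‖p‖ ≤ ‖p + q‖ := by
  refine le_of_sq_le_sq ?_ (norm_nonneg _)
  rw [norm_add_sq_real]
  nlinarith [sq_nonneg ‖q‖]

lemma min_norm_le_two_mul_norm_parabolicArc {x y v : E} (hv : inner ℝ (y - x) v = 0)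
    (hxv : 0 ≤ inner ℝ x v) (hnorm : 2 * ‖y - x‖ ≤ ‖v‖) {t : ℝ} (ht : t ∈ Icc (0 : ℝ) 1) :
    min ‖x‖ ‖y‖ ≤ 2 * ‖parabolicArc x y v t‖ := by
  set p : E := AffineMap.lineMap x y t with hp
  set q : E := (t * (1 - t)) • v with hq
  have hc : 0 ≤ t * (1 - t) := mul_nonneg ht.1 (sub_nonneg.2 ht.2)
  have hpq : 0 ≤ inner ℝ p q := by
    rw [hp, hq, AffineMap.lineMap_apply_module', inner_smul_right, inner_add_left,
      real_inner_smul_left, hv, mul_zero, zero_add]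
    exact mul_nonneg hc hxv
  have hp_le : ‖p‖ ≤ ‖p + q‖ := norm_le_norm_add_of_inner_nonneg hpq
  have hq_le : ‖q‖ ≤ ‖p + q‖ := by
    rw [add_comm]
    exact norm_le_norm_add_of_inner_nonneg (real_inner_comm q p ▸ hpq)
  have hq_norm : t * (1 - t) * (2 * ‖y - x‖) ≤ ‖q‖ := by
    rw [hq, norm_smul, Real.norm_of_nonneg hc]
    exact mul_le_mul_of_nonneg_left hnorm hc
  change min ‖x‖ ‖y‖ ≤ 2 * ‖p + q‖
  -- in each half of `[0, 1]`, `q` is at least as long as the distance from `p` to the near endpoint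
  rcases le_total t (1 / 2) with ht2 | ht2
  · have hxp : ‖x‖ ≤ ‖p‖ + t * ‖y - x‖ := by
      have := norm_sub_norm_le x p
      rw [← dist_eq_norm, dist_left_lineMap, Real.norm_of_nonneg ht.1, dist_comm, dist_eq_norm]
        at this
      linarith
    have : t * ‖y - x‖ ≤ t * (1 - t) * (2 * ‖y - x‖) := by
      nlinarith [mul_nonneg ht.1 (norm_nonneg (y - x))]
    linarith [min_le_left ‖x‖ ‖y‖]
  · have hyp : ‖y‖ ≤ ‖p‖ + (1 - t) * ‖y - x‖ := by
      have := norm_sub_norm_le y p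
      rw [← dist_eq_norm, dist_right_lineMap, Real.norm_of_nonneg (sub_nonneg.2 ht.2), dist_comm,
        dist_eq_norm] at this
      linarith
    have : (1 - t) * ‖y - x‖ ≤ t * (1 - t) * (2 * ‖y - x‖) := by
      nlinarith [mul_nonneg (sub_nonneg.2 ht.2) (norm_nonneg (y - x))]
    linarith [min_le_right ‖x‖ ‖y‖]

lemma exists_injective_parabolicArc_and_min_norm_le [Countable ι] (hE : 1 < finrank ℝ E)
    {x y : ι → E} (hx : Injective x) (hy : Injective y) :
    ∃ v : ι → E, (∀ t ∈ Icc (0 : ℝ) 1, Injective fun i ↦ parabolicArc (x i) (y i) (v i) t) ∧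
      ∀ i, ∀ t ∈ Icc (0 : ℝ) 1,
        min ‖x i‖ ‖y i‖ ≤ 2 * (‖parabolicArc (x i) (y i) (v i) t‖ + 1) := by
  choose u hu hxu hnorm using fun i ↦ exists_inner_eq_zero_of_one_lt_finrank hE (y i - x i) (x i)
    (mul_nonneg zero_le_two (norm_nonneg (y i - x i)))
  obtain ⟨v, hvu, hinj⟩ := exists_forall_injective_parabolicArc hE hx hy u one_pos
  refine ⟨v, hinj, fun i t ht ↦ ?_⟩
  have hmin := min_norm_le_two_mul_norm_parabolicArc (hu i) (hxu i) (hnorm i).ge ht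
  have hdist : ‖parabolicArc (x i) (y i) (u i) t - parabolicArc (x i) (y i) (v i) t‖ ≤ 1 := by
    refine (norm_parabolicArc_sub_le _ _ _ _ ht).trans ?_
    rw [norm_sub_rev]
    exact hvu i
  have hsub := norm_sub_norm_le (parabolicArc (x i) (y i) (u i) t)
    (parabolicArc (x i) (y i) (v i) t)
  linarith

end ParabolicArc

/-- Locally finite configurations in `E` with points labelled by `ι`: injective families leaving
every compact set. It generalizes `IsConf`, see `isConf_iff`. -/
@[ext]
structure OrderedConf (ι E : Type*) [TopologicalSpace E] where
  pts : ι → E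
  injective : Injective pts
  tendsto : Tendsto pts cofinite (cocompact E)

namespace OrderedConf

section Topology

variable {ι E : Type*} [TopologicalSpace E]

/-- The value at a configuration of the linear statistic of a test function, that is, the integral
of `φ` against the counting measure of the configuration. -/
def linStat (φ : C_c(E, ℝ)) (x : OrderedConf ι E) : ℝ := ∑ᶠ i, φ (x.pts i)

/-- The coarsest topology making the points and the linear statistics continuous, that is, the join
of the product topology and the vague topology. -/
instance : TopologicalSpace (OrderedConf ι E) :=
  .induced (fun x ↦ (x.pts, fun φ : C_c(E, ℝ) ↦ linStat φ x)) inferInstance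

lemma continuous_iff {X : Type*} [TopologicalSpace X] {γ : X → OrderedConf ι E} :
    Continuous γ ↔ (∀ i, Continuous fun t ↦ (γ t).pts i) ∧
      ∀ φ : C_c(E, ℝ), Continuous fun t ↦ linStat φ (γ t) := by
  rw [continuous_induced_rng, continuous_prodMk, continuous_pi_iff, continuous_pi_iff]
  rfl

lemma continuous_pts (i : ι) : Continuous fun x : OrderedConf ι E ↦ x.pts i :=
  (continuous_iff.1 continuous_id).1 i

lemma continuous_linStat (φ : C_c(E, ℝ)) : Continuous (linStat φ : OrderedConf ι E → ℝ) :=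
  (continuous_iff.1 continuous_id).2 φ

lemma continuous_of_locallyFinite {X : Type*} [TopologicalSpace X] {γ : X → OrderedConf ι E}
    (hpts : ∀ i, Continuous fun t ↦ (γ t).pts i)
    (hfin : ∀ K : Set E, IsCompact K → LocallyFinite fun i ↦ {t | (γ t).pts i ∈ K}) :
    Continuous γ :=
  continuous_iff.2 ⟨hpts, fun φ ↦ continuous_finsum (fun i ↦ φ.continuous.comp (hpts i)) <|
    (hfin _ φ.hasCompactSupport).subset fun _ _ ht ↦ subset_tsupport φ ht⟩

end Topology

section PathConnected

variable {ι E : Type*} [NormedAddCommGroup E]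

lemma finite_setOf_min_norm_le [ProperSpace E] (x y : OrderedConf ι E) (R : ℝ) :
    {i | min ‖x.pts i‖ ‖y.pts i‖ ≤ R}.Finite := by
  have hfin (z : OrderedConf ι E) : (z.pts ⁻¹' Metric.closedBall 0 R).Finite :=
    tendsto_cofinite_cocompact_iff.1 z.tendsto _ (isCompact_closedBall 0 R)
  refine ((hfin x).union (hfin y)).subset fun i hi ↦ ?_
  simpa using min_le_iff.1 hi

lemma nonempty_of_nontrivial [Countable ι] [NormedSpace ℝ E] [ProperSpace E] [Nontrivial E] :
    Nonempty (OrderedConf ι E) := by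
  obtain ⟨f, hf⟩ := exists_injective_nat ι
  obtain ⟨v, hv⟩ := exists_ne (0 : E)
  refine ⟨⟨fun i ↦ (f i : ℝ) • v, fun i j hij ↦ hf ?_, ?_⟩⟩
  · exact Nat.cast_injective (smul_left_injective ℝ hv hij)
  · rw [← Metric.cobounded_eq_cocompact, ← tendsto_norm_atTop_iff_cobounded]
    simp only [norm_smul, Real.norm_natCast]
    exact (tendsto_natCast_atTop_atTop.comp
      (Nat.cofinite_eq_atTop ▸ hf.tendsto_cofinite)).atTop_mul_const (norm_pos_iff.2 hv)

theorem joined_of_one_lt_finrank [Countable ι] [InnerProductSpace ℝ E] (hE : 1 < finrank ℝ E)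
    (x y : OrderedConf ι E) : Joined x y := by
  have : FiniteDimensional ℝ E := .of_finrank_pos (by lia)
  obtain ⟨v, hinj, hnorm⟩ :=
    exists_injective_parabolicArc_and_min_norm_le hE x.injective y.injective
  let H (t : ℝ) (i : ι) : E := parabolicArc (x.pts i) (y.pts i) (v i) t
  have hfin (K : Set E) (hK : IsCompact K) : {i | ∃ t ∈ Icc (0 : ℝ) 1, H t i ∈ K}.Finite := by
    obtain ⟨R, hR⟩ := hK.isBounded.exists_norm_le
    refine (finite_setOf_min_norm_le x y (2 * (R + 1))).subset ?_
    rintro i ⟨t, ht, hi⟩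
    exact (hnorm i t ht).trans (by gcongr; exact hR _ hi)
  let γ (t : unitInterval) : OrderedConf ι E :=
    ⟨H t, hinj t t.2, tendsto_cofinite_cocompact_iff.2 fun K hK ↦
      (hfin K hK).subset fun _ hi ↦ ⟨t, t.2, hi⟩⟩
  have hγ : Continuous γ := continuous_of_locallyFinite
    (fun i ↦ (contDiff_parabolicArc _ _ _ (n := 0)).continuous.comp continuous_subtype_val)
    fun K hK _ ↦ ⟨univ, univ_mem, (hfin K hK).subset fun _ ⟨t, ht, _⟩ ↦ ⟨t, t.2, ht⟩⟩
  exact ⟨⟨⟨γ, hγ⟩, by ext i; simp [γ, H], by ext i; simp [γ, H]⟩⟩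

end PathConnected

end OrderedConf

theorem confSp_pathConnected_general {ι E : Type*} [Countable ι] [NormedAddCommGroup E]
    [InnerProductSpace ℝ E] (hE : 1 < finrank ℝ E) : PathConnectedSpace (OrderedConf ι E) where
  nonempty :=
    have : FiniteDimensional ℝ E := .of_finrank_pos (by lia)
    have : Nontrivial E := nontrivial_of_finrank_pos (R := ℝ) (by lia)
    OrderedConf.nonempty_of_nontrivial
  joined := OrderedConf.joined_of_one_lt_finrank hE

lemma isConf_iff {x : ℕ → ℂ} :
    IsConf x ↔ Injective x ∧ Tendsto x cofinite (cocompact ℂ) := by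
  refine and_congr_right fun _ ↦ ?_
  rw [tendsto_cofinite_cocompact_iff]
  constructor
  · intro h K hK
    obtain ⟨R, hR, hKR⟩ := hK.isBounded.exists_pos_norm_le
    exact (h R hR).subset fun j hj ↦ hKR _ hj
  · intro h R _
    simpa [preimage] using h _ (isCompact_closedBall 0 R)

lemma continuous_tsum_half_pow_mul {X : Type*} [TopologicalSpace X] {f : ℕ → X → ℝ}
    (hf : ∀ j, Continuous (f j)) (hf1 : ∀ j t, |f j t| ≤ 1) :
    Continuous fun t ↦ ∑' j : ℕ, (1 / 2 : ℝ) ^ (j + 1) * f j t := by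
  refine continuous_tsum (fun j ↦ continuous_const.mul (hf j))
    ((summable_nat_add_iff 1).2 summable_geometric_two) fun j t ↦ ?_
  rw [norm_mul, Real.norm_of_nonneg (by positivity)]
  exact mul_le_of_le_one_right (by positivity) (hf1 j t)

namespace OrderedConf

lemma Ssum_Pmap_pts (T : TestFamily) (j : ℕ) (x : OrderedConf ℕ ℂ) :
    Ssum T j (Pmap x.pts) = x.linStat ⟨⟨T.φ j, T.cont j⟩, T.cpt j⟩ :=
  finsum_mem_range x.injective

lemma continuous_dProd_pts (x : ℕ → ℂ) : Continuous fun y : OrderedConf ℕ ℂ ↦ dProd x y.pts :=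
  continuous_tsum_half_pow_mul
    (fun j ↦ (continuous_const.sub (continuous_pts j)).norm.min continuous_const)
    fun j y ↦ by
      rw [abs_of_nonneg (by positivity)]
      exact min_le_right _ _

lemma continuous_dV_Pmap_pts (T : TestFamily) (A : Set ℂ) :
    Continuous fun y : OrderedConf ℕ ℂ ↦ dV T A (Pmap y.pts) := by
  refine continuous_tsum_half_pow_mul (fun j ↦ ?_) fun j y ↦ ?_
  · simp only [Ssum_Pmap_pts]
    have hdiff := (continuous_const (y := Ssum T j A)).sub
      (continuous_linStat (ι := ℕ) ⟨⟨T.φ j, T.cont j⟩, T.cpt j⟩)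
    exact hdiff.abs.div (continuous_const.add hdiff.abs) fun y ↦ by positivity
  · rw [abs_of_nonneg (by positivity)]
    exact div_le_one_of_le₀ (le_add_of_nonneg_left zero_le_one) (by positivity)

end OrderedConf

namespace ConfSp

/-- The identity on configurations, from the topology of points and linear statistics to that of
`d_sum`. -/
def ofOrderedConf (T : TestFamily) (x : OrderedConf ℕ ℂ) : ConfSp T where
  seq := x.pts
  prop := isConf_iff.2 ⟨x.injective, x.tendsto⟩

lemma ofOrderedConf_surjective (T : TestFamily) : Surjective (ofOrderedConf T) := fun x ↦
  ⟨⟨x.seq, (isConf_iff.1 x.prop).1, (isConf_iff.1 x.prop).2⟩, rfl⟩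

lemma continuous_ofOrderedConf (T : TestFamily) : Continuous (ofOrderedConf T) := by
  refine continuous_generateFrom_iff.2 ?_
  rintro _ ⟨x, ε, -, rfl⟩
  have hdSum := (OrderedConf.continuous_dProd_pts x.seq).add
    (OrderedConf.continuous_dV_Pmap_pts T (Pmap x.seq))
  exact isOpen_lt hdSum continuous_const

end ConfSp

/-- The metric space `(Conf^lf_∞(ℂ), d_sum)` is path-connected. -/
theorem confSp_pathConnected (T : TestFamily) : PathConnectedSpace (ConfSp T) := by
  have : PathConnectedSpace (OrderedConf ℕ ℂ) :=
    confSp_pathConnected_general (by simp [Complex.finrank_real_complex])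
  exact (ConfSp.ofOrderedConf_surjective T).pathConnectedSpace (ConfSp.continuous_ofOrderedConf T)
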